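/- Characterization of strict pre-dissipativity with some quadratic storage function (Corollary 4.9): Assume there exists c_K > 0 such that ‖Ku‖ ≥ c_K‖Bu‖ for all u ∈ U, and let (x_e,u_e) be a controlled equilibrium. Then there exist a bounded self-adjoint operator P on H, w ∈ H and α of class 𝒦 such that 2Re⟨Ax + Bu, Px + w⟩ ≤ ℓ(x,u) − ℓ(x_e,u_e) − α(‖x − x_e‖) for all x ∈ dom A, u ∈ U, if and only if both of the following hold: (a) there exists w̃ ∈ dom A* with A*w̃ = z + C*C x_e and B*w̃ = v + K*K u_e; (b) there exist a bounded self-adjoint operator Q on H and m > 0 such that ‖Cx‖² − 2Re⟨Ax, Qx⟩ ≥ m‖x‖² for all x ∈ dom A. -/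

import Mathlib

open scoped InnerProductSpace
open RCLike ContinuousLinearMap

/-- A function of class `𝒦`: continuous, strictly increasing on `[0,∞)` with `α 0 = 0`. -/
def IsClassK (α : ℝ → ℝ) : Prop :=
  ContinuousOn α (Set.Ici 0) ∧ StrictMonoOn α (Set.Ici 0) ∧ α 0 = 0

/-- The generalized linear-quadratic stage cost
`ℓ(x,u) = ‖Cx‖² + ‖Ku‖² + 2Re⟨z,x⟩ + 2Re⟨v,u⟩`. -/
noncomputable def ell {𝕜 H U Y Z : Type*} [RCLike 𝕜]
    [NormedAddCommGroup H] [InnerProductSpace 𝕜 H]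
    [NormedAddCommGroup U] [InnerProductSpace 𝕜 U]
    [NormedAddCommGroup Y] [InnerProductSpace 𝕜 Y]
    [NormedAddCommGroup Z] [InnerProductSpace 𝕜 Z]
    (C : H →L[𝕜] Y) (K : U →L[𝕜] Z) (z : H) (v : U) (x : H) (u : U) : ℝ :=
  ‖C x‖ ^ 2 + ‖K u‖ ^ 2 + 2 * re ⟪z, x⟫_𝕜 + 2 * re ⟪v, u⟫_𝕜

/-!
Translating the equilibrium to the origin replaces the linear data `(z, v)` of the cost by
`(z + C*C x_e, v + K*K u_e)` and `w` by `w̃ = P x_e + w`. The dissipation inequality then bounds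
`α ‖x‖` by the sum of a quadratic form and twice the real part of a linear functional. Since
`α ≥ 0`, scaling the argument towards `0` from both sides forces the linear functional to vanish,
which is exactly the adjoint equation for `w̃`; what remains is `α ‖x‖ ≤` quadratic form, and by
homogeneity one may take `α r = m r ^ 2`. Conversely, a form inequality for `u = 0` extends to all
`u` after replacing `Q` by `ε Q` with `ε` small, because the mixed term `⟨B u, ε Q x⟩` is then
absorbed by `‖K u‖ ^ 2` and half of the coercivity.
-/

section Homogeneous

variable {𝕜 E : Type*} [RCLike 𝕜]

theorem eq_zero_of_forall_mul_le_sq_mul {b c : ℝ} (h : ∀ t : ℝ, t * b ≤ t ^ 2 * c) : b = 0 := by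
  have hdiscrim : discrim c (-b) 0 ≤ 0 := discrim_le_zero fun t => by linarith [h t]
  have hsq : b ^ 2 ≤ 0 := by simpa [discrim] using hdiscrim
  exact sq_nonpos_iff b |>.1 hsq

theorem linearMap_eq_zero_of_re_eq_zero [AddCommGroup E] [Module 𝕜 E] {f : E →ₗ[𝕜] 𝕜}
    (hf : ∀ x, re (f x) = 0) : f = 0 := by
  ext x
  have hsq : re (f (starRingEnd 𝕜 (f x) • x)) = ‖f x‖ ^ 2 := by
    rw [map_smul, smul_eq_mul, RCLike.conj_mul, ← ofReal_pow, ofReal_re]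
  simpa using hsq.symm.trans (hf _)

theorem forall_le_quadratic_add_re_linear_iff [AddCommGroup E] [Module 𝕜 E] {q r : E → ℝ}
    (hq : ∀ (t : ℝ) x, q ((t : 𝕜) • x) = t ^ 2 * q x) (hr : ∀ x, 0 ≤ r x) (f : E →ₗ[𝕜] 𝕜) :
    (∀ x, r x ≤ q x + 2 * re (f x)) ↔ f = 0 ∧ ∀ x, r x ≤ q x := by
  refine ⟨fun h => ?_, fun ⟨hf, h⟩ x => by simpa [hf] using h x⟩
  have hf : f = 0 := linearMap_eq_zero_of_re_eq_zero fun x => by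
    have hscale (t : ℝ) : 0 ≤ t ^ 2 * q x + 2 * (t * re (f x)) := by
      simpa only [hq, map_smul, smul_eq_mul, re_ofReal_mul] using
        (hr _).trans (h ((t : 𝕜) • x))
    have hneg : -re (f x) = 0 :=
      eq_zero_of_forall_mul_le_sq_mul (c := q x / 2) fun t => by linarith [hscale t]
    exact neg_eq_zero.1 hneg
  exact ⟨hf, by simpa [hf] using h⟩

theorem mul_norm_sq_le_of_forall_comp_norm_le [NormedAddCommGroup E] [NormedSpace 𝕜 E]
    {q : E → ℝ} {α : ℝ → ℝ} (hq : ∀ (t : ℝ) x, q ((t : 𝕜) • x) = t ^ 2 * q x)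
    (h : ∀ x, α ‖x‖ ≤ q x) (x : E) : α 1 * ‖x‖ ^ 2 ≤ q x := by
  rcases eq_or_ne x 0 with rfl | hx
  · have hq0 : q 0 = 0 := by simpa using hq 0 0
    simp [hq0]
  have hpos : 0 < ‖x‖ := norm_pos_iff.2 hx
  have hunit : ‖((‖x‖⁻¹ : ℝ) : 𝕜) • x‖ = 1 := by
    rw [norm_smul, norm_ofReal, abs_inv, abs_norm, inv_mul_cancel₀ hpos.ne']
  calc α 1 * ‖x‖ ^ 2 ≤ (‖x‖⁻¹ ^ 2 * q x) * ‖x‖ ^ 2 := by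
        gcongr
        simpa only [hunit, hq] using h (((‖x‖⁻¹ : ℝ) : 𝕜) • x)
    _ = q x := by field_simp

theorem two_mul_re_inner_le_sq_add_sq_div [NormedAddCommGroup E] [InnerProductSpace 𝕜 E]
    {c k : ℝ} (hc : 0 < c) {x : E} (hx : c * ‖x‖ ≤ k) (y : E) :
    2 * re ⟪x, y⟫_𝕜 ≤ k ^ 2 + (‖y‖ / c) ^ 2 := by
  calc 2 * re ⟪x, y⟫_𝕜 ≤ 2 * (‖x‖ * ‖y‖) := by gcongr; exact re_inner_le_norm x y
    _ = 2 * (c * ‖x‖) * (‖y‖ / c) := by field_simp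
    _ ≤ 2 * k * (‖y‖ / c) := by gcongr
    _ ≤ k ^ 2 + (‖y‖ / c) ^ 2 := two_mul_le_add_sq _ _

end Homogeneous

namespace IsClassK

variable {α : ℝ → ℝ}

theorem pos (hα : IsClassK α) {r : ℝ} (hr : 0 < r) : 0 < α r :=
  hα.2.2 ▸ hα.2.1 Set.self_mem_Ici hr.le hr

theorem nonneg (hα : IsClassK α) {r : ℝ} (hr : 0 ≤ r) : 0 ≤ α r :=
  hα.2.2 ▸ hα.2.1.monotoneOn Set.self_mem_Ici hr hr

end IsClassK

theorem isClassK_const_mul_sq {m : ℝ} (hm : 0 < m) : IsClassK fun r => m * r ^ 2 := by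
  refine ⟨by fun_prop, fun a ha b _ hab => ?_, by simp⟩
  exact mul_lt_mul_of_pos_left (pow_lt_pow_left₀ hab ha two_ne_zero) hm

section Dissipativity

variable {𝕜 H U Y Z : Type*} [RCLike 𝕜]
  [NormedAddCommGroup H] [InnerProductSpace 𝕜 H] [NormedAddCommGroup U] [InnerProductSpace 𝕜 U]
  [NormedAddCommGroup Y] [InnerProductSpace 𝕜 Y] [NormedAddCommGroup Z] [InnerProductSpace 𝕜 Z]

/-- The dissipation inequality at `(xe, ue)` for the system `x' = A x + B u`, the stage cost `ℓ`,
the storage function `⟪P x, x⟫ + 2 re ⟪w, x⟫` and the gain `α`. Its left-hand side is the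
derivative of the storage function along trajectories when `P` is self-adjoint. -/
def IsStrictlyPreDissipativeWith (A : H →ₗ.[𝕜] H) (B : U →L[𝕜] H) (ℓ : H → U → ℝ)
    (P : H →L[𝕜] H) (w : H) (α : ℝ → ℝ) (xe : H) (ue : U) : Prop :=
  ∀ (x : A.domain) (u : U),
    2 * re ⟪A x + B u, P (x : H) + w⟫_𝕜 ≤ ℓ x u - ℓ xe ue - α ‖(x : H) - xe‖

/-- The quadratic part of the supply surplus: stage cost minus storage derivative, once the linear
parts of the cost and of the storage function are dropped. -/
noncomputable def dissipationForm (A : H →ₗ.[𝕜] H) (B : U →L[𝕜] H) (C : H →L[𝕜] Y)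
    (K : U →L[𝕜] Z) (P : H →L[𝕜] H) (x : A.domain) (u : U) : ℝ :=
  ‖C (x : H)‖ ^ 2 + ‖K u‖ ^ 2 - 2 * re ⟪A x + B u, P (x : H)⟫_𝕜

/-- The linear functional `(x, u) ↦ ⟪a, x⟫ + ⟪b, u⟫ - ⟪w, A x + B u⟫`, which measures by how much
`w` fails to solve the adjoint equations `A* w = a`, `B* w = b`. -/
noncomputable def adjointDefect (A : H →ₗ.[𝕜] H) (B : U →L[𝕜] H) (a : H) (b : U) (w : H) :
    A.domain × U →ₗ[𝕜] 𝕜 :=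
  (innerₛₗ 𝕜 a ∘ₗ A.domain.subtype).coprod (innerₛₗ 𝕜 b) -
    innerₛₗ 𝕜 w ∘ₗ A.toFun.coprod (B : U →ₗ[𝕜] H)

variable (A : H →ₗ.[𝕜] H) (B : U →L[𝕜] H) (C : H →L[𝕜] Y) (K : U →L[𝕜] Z) (P : H →L[𝕜] H)

theorem adjointDefect_apply (a : H) (b : U) (w : H) (x : A.domain) (u : U) :
    adjointDefect A B a b w (x, u) = ⟪a, (x : H)⟫_𝕜 + ⟪b, u⟫_𝕜 - ⟪w, A x + B u⟫_𝕜 :=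
  rfl

theorem dissipationForm_smul (t : ℝ) (x : A.domain) (u : U) :
    dissipationForm A B C K P ((t : 𝕜) • x) ((t : 𝕜) • u) =
      t ^ 2 * dissipationForm A B C K P x u := by
  simp only [dissipationForm, LinearPMap.map_smul, Submodule.coe_smul, map_smul, ← smul_add,
    inner_smul_left, inner_smul_right, norm_smul, conj_ofReal, re_ofReal_mul, norm_ofReal, mul_pow,
    sq_abs]
  ring

theorem ell_sub_two_mul_re_inner_eq (a : H) (b : U) (w : H) (x : A.domain) (u : U) :
    ell C K a b (x : H) u - 2 * re ⟪A x + B u, P (x : H) + w⟫_𝕜 =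
      dissipationForm A B C K P x u + 2 * re (adjointDefect A B a b w (x, u)) := by
  simp only [ell, dissipationForm, adjointDefect_apply, inner_add_right (A x + B u), map_add,
    map_sub, inner_re_symm (A x + B u) w]
  ring

theorem ell_add_sub_ell [CompleteSpace H] [CompleteSpace U] [CompleteSpace Y] [CompleteSpace Z]
    (z : H) (v : U) (x xe : H) (u ue : U) :
    ell C K z v (x + xe) (u + ue) - ell C K z v xe ue =
      ell C K (z + adjoint C (C xe)) (v + adjoint K (K ue)) x u := by
  simp only [ell, map_add, inner_add_left, inner_add_right, adjoint_inner_left,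
    norm_add_sq (𝕜 := 𝕜), inner_re_symm (C x), inner_re_symm (K u)]
  ring

variable {A B}

theorem adjointDefect_eq_zero_iff [CompleteSpace H] [CompleteSpace U]
    (hA : Dense (A.domain : Set H)) {a : H} {b : U} {w : H} :
    adjointDefect A B a b w = 0 ↔
      ∃ hw : w ∈ A.adjoint.domain, A.adjoint ⟨w, hw⟩ = a ∧ adjoint B w = b := by
  constructor
  · intro hdefect
    have hstate (x : A.domain) : ⟪a, (x : H)⟫_𝕜 = ⟪w, A x⟫_𝕜 := by
      simpa [adjointDefect_apply, sub_eq_zero] using LinearMap.congr_fun hdefect (x, 0)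
    have hcontrol (u : U) : ⟪b, u⟫_𝕜 = ⟪w, B u⟫_𝕜 := by
      simpa [adjointDefect_apply, sub_eq_zero] using LinearMap.congr_fun hdefect (0, u)
    exact ⟨LinearPMap.mem_adjoint_domain_of_exists w ⟨a, hstate⟩,
      LinearPMap.adjoint_apply_eq hA _ hstate,
      ext_inner_right 𝕜 fun u => by rw [adjoint_inner_left, hcontrol]⟩
  · rintro ⟨hw, rfl, rfl⟩
    refine LinearMap.ext fun ⟨x, u⟩ => ?_
    rw [adjointDefect_apply, LinearPMap.adjoint_isFormalAdjoint hA ⟨w, hw⟩ x, adjoint_inner_left,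
      ← inner_add_right, sub_self, LinearMap.zero_apply]

variable {C K P}

theorem isStrictlyPreDissipativeWith_iff_translate {ℓ : H → U → ℝ} {w : H} {α : ℝ → ℝ}
    {xe : A.domain} {ue : U} (heq : A xe + B ue = 0) :
    IsStrictlyPreDissipativeWith A B ℓ P w α xe ue ↔
      IsStrictlyPreDissipativeWith A B (fun x u => ℓ (x + xe) (u + ue)) P (P xe + w) α 0 0 := by
  have hdrift (x : A.domain) (u : U) : A (x + xe) + B (u + ue) = A x + B u := by
    rw [LinearPMap.map_add, map_add, add_add_add_comm, heq, add_zero]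
  unfold IsStrictlyPreDissipativeWith
  rw [← (Equiv.addRight xe).forall_congr_right]
  refine forall_congr' fun x => ?_
  rw [← (Equiv.addRight ue).forall_congr_right]
  refine forall_congr' fun u => ?_
  simp only [Equiv.coe_addRight, hdrift, Submodule.coe_add, map_add P, add_assoc,
    add_sub_cancel_right, zero_add, sub_zero]

theorem isStrictlyPreDissipativeWith_ell_iff [CompleteSpace H] [CompleteSpace U] [CompleteSpace Y]
    [CompleteSpace Z] {z : H} {v : U} {w : H} {α : ℝ → ℝ} (hα : ∀ r, 0 ≤ r → 0 ≤ α r)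
    {xe : A.domain} {ue : U} (heq : A xe + B ue = 0) :
    IsStrictlyPreDissipativeWith A B (ell C K z v) P w α xe ue ↔
      adjointDefect A B (z + adjoint C (C xe)) (v + adjoint K (K ue)) (P xe + w) = 0 ∧
        ∀ (x : A.domain) (u : U), α ‖(x : H)‖ ≤ dissipationForm A B C K P x u := by
  have hsplit := forall_le_quadratic_add_re_linear_iff (𝕜 := 𝕜)
    (q := fun p : A.domain × U => dissipationForm A B C K P p.1 p.2)
    (r := fun p : A.domain × U => α ‖(p.1 : H)‖)
    (fun t p => dissipationForm_smul A B C K P t p.1 p.2)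
    (fun p => hα _ (norm_nonneg _))
    (adjointDefect A B (z + adjoint C (C xe)) (v + adjoint K (K ue)) (P xe + w))
  simp only [Prod.forall, ← ell_sub_two_mul_re_inner_eq] at hsplit
  rw [isStrictlyPreDissipativeWith_iff_translate heq, ← hsplit]
  simp only [IsStrictlyPreDissipativeWith, zero_add, ell_add_sub_ell, sub_zero]
  exact forall₂_congr fun x u => le_sub_comm

theorem mul_norm_sq_le_of_le_dissipationForm_zero {α : ℝ → ℝ}
    (h : ∀ x : A.domain, α ‖(x : H)‖ ≤ dissipationForm A B C K P x 0) (x : A.domain) :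
    α 1 * ‖(x : H)‖ ^ 2 ≤ ‖C (x : H)‖ ^ 2 - 2 * re ⟪A x, P (x : H)⟫_𝕜 := by
  have hcoercive := mul_norm_sq_le_of_forall_comp_norm_le
    (q := fun y => dissipationForm A B C K P y 0)
    (fun t y => by simpa only [smul_zero] using dissipationForm_smul A B C K P t y 0)
    h x
  simpa [dissipationForm] using hcoercive

theorem exists_smul_mul_norm_sq_le_dissipationForm {c m : ℝ} (hc : 0 < c) (hm : 0 < m)
    (hKB : ∀ u, c * ‖B u‖ ≤ ‖K u‖) {Q : H →L[𝕜] H}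
    (hQ : ∀ x : A.domain,
      m * ‖(x : H)‖ ^ 2 ≤ ‖C (x : H)‖ ^ 2 - 2 * re ⟪A x, Q (x : H)⟫_𝕜) :
    ∃ ε : ℝ, 0 < ε ∧ ∀ (x : A.domain) (u : U),
      ε * m / 2 * ‖(x : H)‖ ^ 2 ≤ dissipationForm A B C K ((ε : 𝕜) • Q) x u := by
  obtain ⟨δ, hδ, hδm⟩ := exists_pos_mul_lt (half_pos hm) ((‖Q‖ / c) ^ 2)
  obtain ⟨ε, hε, hε1, hεδ⟩ : ∃ ε : ℝ, 0 < ε ∧ ε ≤ 1 ∧ ε ≤ δ :=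
    ⟨min 1 δ, lt_min one_pos hδ, min_le_left _ _, min_le_right _ _⟩
  refine ⟨ε, hε, fun x u => ?_⟩
  have hmixed : 2 * (ε * re ⟪B u, Q (x : H)⟫_𝕜) ≤ ‖K u‖ ^ 2 + ε * (m / 2) * ‖(x : H)‖ ^ 2 :=
    calc 2 * (ε * re ⟪B u, Q (x : H)⟫_𝕜) = 2 * re ⟪B u, (ε : 𝕜) • Q (x : H)⟫_𝕜 := by
          rw [inner_smul_right, re_ofReal_mul]
      _ ≤ ‖K u‖ ^ 2 + (‖(ε : 𝕜) • Q (x : H)‖ / c) ^ 2 :=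
          two_mul_re_inner_le_sq_add_sq_div hc (hKB u) _
      _ ≤ ‖K u‖ ^ 2 + (ε * (‖Q‖ * ‖(x : H)‖) / c) ^ 2 := by
          rw [norm_smul, norm_ofReal, abs_of_pos hε]
          gcongr
          exact Q.le_opNorm x
      _ = ‖K u‖ ^ 2 + ε * ((‖Q‖ / c) ^ 2 * ε) * ‖(x : H)‖ ^ 2 := by ring
      _ ≤ ‖K u‖ ^ 2 + ε * (m / 2) * ‖(x : H)‖ ^ 2 := by
          gcongr
          exact (mul_le_mul_of_nonneg_left hεδ (sq_nonneg _)).trans hδm.le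
  have hstate : ε * (m * ‖(x : H)‖ ^ 2 + 2 * re ⟪A x, Q (x : H)⟫_𝕜) ≤ ‖C (x : H)‖ ^ 2 :=
    calc ε * (m * ‖(x : H)‖ ^ 2 + 2 * re ⟪A x, Q (x : H)⟫_𝕜) ≤ ε * ‖C (x : H)‖ ^ 2 := by
          gcongr
          linarith [hQ x]
      _ ≤ ‖C (x : H)‖ ^ 2 := mul_le_of_le_one_left (sq_nonneg _) hε1
  simp only [dissipationForm, smul_apply, inner_smul_right, re_ofReal_mul, inner_add_left, map_add]
  linarith

end Dissipativity

/-- **Corollary 4.9**: strict pre-dissipativity at a controlled equilibrium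
`(x_e, u_e)` with *some* quadratic storage function is equivalent to the algebraic
condition on `(z,v)` together with the Lyapunov-like form inequality. -/
theorem strict_predissipativity_some_quadratic_storage_iff
    {𝕜 H U Y Z : Type*} [RCLike 𝕜]
    [NormedAddCommGroup H] [InnerProductSpace 𝕜 H] [CompleteSpace H]
    [NormedAddCommGroup U] [InnerProductSpace 𝕜 U] [CompleteSpace U]
    [NormedAddCommGroup Y] [InnerProductSpace 𝕜 Y] [CompleteSpace Y]
    [NormedAddCommGroup Z] [InnerProductSpace 𝕜 Z] [CompleteSpace Z]
    (A : H →ₗ.[𝕜] H) (hA : Dense (A.domain : Set H))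
    (B : U →L[𝕜] H) (C : H →L[𝕜] Y) (K : U →L[𝕜] Z) (z : H) (v : U)
    (cK : ℝ) (hcK : 0 < cK) (hKB : ∀ u : U, cK * ‖B u‖ ≤ ‖K u‖)
    (xe : H) (ue : U) (hxe : xe ∈ A.domain) (heq : A ⟨xe, hxe⟩ + B ue = 0) :
    (∃ P : H →L[𝕜] H, IsSelfAdjoint P ∧ ∃ w : H, ∃ α : ℝ → ℝ, IsClassK α ∧
      ∀ (x : A.domain) (u : U),
        2 * re ⟪A x + B u, P (x : H) + w⟫_𝕜 ≤
          ell C K z v (x : H) u - ell C K z v xe ue - α ‖(x : H) - xe‖)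
    ↔
    ((∃ w' : H, ∃ hw' : w' ∈ A.adjoint.domain,
        A.adjoint ⟨w', hw'⟩ = z + adjoint C (C xe) ∧
        adjoint B w' = v + adjoint K (K ue)) ∧
      ∃ Q : H →L[𝕜] H, IsSelfAdjoint Q ∧ ∃ m : ℝ, 0 < m ∧
        ∀ x : A.domain,
          m * ‖(x : H)‖ ^ 2 ≤ ‖C (x : H)‖ ^ 2 - 2 * re ⟪A x, Q (x : H)⟫_𝕜) := by
  constructor
  · rintro ⟨P, hP, w, α, hα, hdiss⟩
    obtain ⟨hdefect, hform⟩ :=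
      (isStrictlyPreDissipativeWith_ell_iff (xe := ⟨xe, hxe⟩) (fun _ => hα.nonneg) heq).1 hdiss
    exact ⟨⟨P xe + w, (adjointDefect_eq_zero_iff hA).1 hdefect⟩,
      P, hP, α 1, hα.pos one_pos, mul_norm_sq_le_of_le_dissipationForm_zero fun x => hform x 0⟩
  · rintro ⟨⟨w', hw'⟩, Q, hQ, m, hm, hcoercive⟩
    obtain ⟨ε, hε, hform⟩ := exists_smul_mul_norm_sq_le_dissipationForm hcK hm hKB hcoercive
    have hα : IsClassK fun r => ε * m / 2 * r ^ 2 := isClassK_const_mul_sq (by positivity)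
    refine ⟨(ε : 𝕜) • Q, .smul (conj_ofReal ε) hQ, w' - ((ε : 𝕜) • Q) xe, _, hα, ?_⟩
    refine (isStrictlyPreDissipativeWith_ell_iff (xe := ⟨xe, hxe⟩) (fun _ => hα.nonneg) heq).2
      ⟨?_, hform⟩
    rw [add_sub_cancel]
    exact (adjointDefect_eq_zero_iff hA).2 hw'
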